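/- arXiv:1705.02127 — 3 statements merged into one kernel-verified Lean document; each statement's English description precedes it below -/
import Mathlib

section
/- Let x and y be n-dimensional bit vectors and let s_i denote the binary representation of the index i with ⌈log n⌉ bits. For each 1 ≤ i ≤ n let l_i be the bit vector obtained by concatenating x[i], ¬x[i], ¬x[i], s_i, and ¬s_i, and let r_i be the bit vector obtained by concatenating ¬y[i], y[i], ¬y[i], ¬s_i, and s_i (all of dimension 2⌈log n⌉ + 3). Then there exists an index k with x[k] = y[k] = 1 if and only if there exist indices i and j such that l_i and r_j are orthogonal. -/
namespace BitOV

/-- Two bit vectors (functions into `Fin 2`) are orthogonal if in every coordinate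
at least one of them is `0`. -/
def Orth {d : ℕ} (a b : Fin d → Fin 2) : Prop := ∀ k, a k = 0 ∨ b k = 0

/-- Flip a bit: `¬1 = 0` and `¬0 = 1`. -/
def bflip (b : Fin 2) : Fin 2 := 1 - b

/-- The `k`-th bit of the binary representation of `m`. -/
def bitAt (m k : ℕ) : Fin 2 := if Nat.testBit m k then 1 else 0

/-- The binary representation of the index `i` with `⌈log n⌉` bits. -/
def srep (n : ℕ) (i : Fin n) : Fin (Nat.clog 2 n) → Fin 2 := fun k => bitAt i.val k.val

/-- The vector `l_i`: the concatenation of `x[i]`, `¬x[i]`, `¬x[i]`, `s_i` and `¬s_i`. -/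
def lvec {n : ℕ} (x : Fin n → Fin 2) (i : Fin n) :
    Fin (3 + Nat.clog 2 n + Nat.clog 2 n) → Fin 2 :=
  Fin.append (Fin.append ![x i, bflip (x i), bflip (x i)] (srep n i))
    (fun k => bflip (srep n i k))

/-- The vector `r_j`: the concatenation of `¬y[j]`, `y[j]`, `¬y[j]`, `¬s_j` and `s_j`. -/
def rvec {n : ℕ} (y : Fin n → Fin 2) (j : Fin n) :
    Fin (3 + Nat.clog 2 n + Nat.clog 2 n) → Fin 2 :=
  Fin.append (Fin.append ![bflip (y j), y j, bflip (y j)] (fun k => bflip (srep n j k)))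
    (srep n j)

/-! Since `s` is orthogonal to `¬t` exactly when `s ≤ t` pointwise, the two index blocks of `l_i`
and `r_j` encode `s_i ≤ s_j` and `s_j ≤ s_i`, that is `i = j`. The first two coordinates likewise
encode `x[i] = y[j]`, and the third one excludes the common value `0`. -/

theorem orth_comm {d : ℕ} {a b : Fin d → Fin 2} : Orth a b ↔ Orth b a :=
  forall_congr' fun _ => or_comm

theorem orth_append_iff {d e : ℕ} {a b : Fin d → Fin 2} {a' b' : Fin e → Fin 2} :
    Orth (Fin.append a a') (Fin.append b b') ↔ Orth a b ∧ Orth a' b' := by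
  simp only [Orth, Fin.forall_fin_add, Fin.append_left, Fin.append_right]

theorem eq_zero_or_bflip_eq_zero_iff_le {a b : Fin 2} : a = 0 ∨ bflip b = 0 ↔ a ≤ b := by
  decide +revert

theorem orth_bflip_right_iff_le {d : ℕ} {s t : Fin d → Fin 2} :
    Orth s (fun k => bflip (t k)) ↔ s ≤ t :=
  forall_congr' fun _ => eq_zero_or_bflip_eq_zero_iff_le

theorem orth_bflip_left_iff_le {d : ℕ} {s t : Fin d → Fin 2} :
    Orth (fun k => bflip (s k)) t ↔ t ≤ s :=
  orth_comm.trans orth_bflip_right_iff_le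

theorem orth_vec_bflip_iff_eq_one {a b : Fin 2} :
    Orth ![a, bflip a, bflip a] ![bflip b, b, bflip b] ↔ a = 1 ∧ b = 1 := by
  unfold Orth
  decide +revert

theorem bitAt_eq_bitAt_iff {m m' k : ℕ} :
    bitAt m k = bitAt m' k ↔ m.testBit k = m'.testBit k := by
  unfold bitAt
  cases m.testBit k <;> cases m'.testBit k <;> decide

theorem eq_of_forall_lt_bitAt_eq {m m' w : ℕ} (hm : m < 2 ^ w) (hm' : m' < 2 ^ w)
    (h : ∀ k < w, bitAt m k = bitAt m' k) : m = m' := by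
  refine Nat.eq_of_testBit_eq fun k => ?_
  rcases lt_or_ge k w with hk | hk
  · exact bitAt_eq_bitAt_iff.mp (h k hk)
  · have hpow : 2 ^ w ≤ 2 ^ k := Nat.pow_le_pow_right two_pos hk
    rw [Nat.testBit_lt_two_pow (hm.trans_le hpow), Nat.testBit_lt_two_pow (hm'.trans_le hpow)]

theorem srep_injective (n : ℕ) : Function.Injective (srep n) := by
  intro i j hij
  have lt_two_pow (m : Fin n) : m.val < 2 ^ Nat.clog 2 n :=
    m.isLt.trans_le (Nat.le_pow_clog one_lt_two n)
  exact Fin.ext <| eq_of_forall_lt_bitAt_eq (lt_two_pow i) (lt_two_pow j) fun k hk =>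
    congrFun hij ⟨k, hk⟩

theorem orth_lvec_rvec_iff {n : ℕ} {x y : Fin n → Fin 2} {i j : Fin n} :
    Orth (lvec x i) (rvec y j) ↔ (x i = 1 ∧ y j = 1) ∧ i = j := by
  calc
    Orth (lvec x i) (rvec y j) ↔
        ((x i = 1 ∧ y j = 1) ∧ srep n i ≤ srep n j) ∧ srep n j ≤ srep n i := by
      rw [lvec, rvec, orth_append_iff, orth_append_iff, orth_vec_bflip_iff_eq_one,
        orth_bflip_right_iff_le, orth_bflip_left_iff_le]
    _ ↔ (x i = 1 ∧ y j = 1) ∧ i = j := by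
      rw [and_assoc, ← le_antisymm_iff, (srep_injective n).eq_iff]

theorem disjointness_iff_orthogonal_pair (n : ℕ) (hn : 1 ≤ n) (x y : Fin n → Fin 2) :
    (∃ k, x k = 1 ∧ y k = 1) ↔ ∃ i j : Fin n, Orth (lvec x i) (rvec y j) := by
  constructor
  · rintro ⟨k, hk⟩
    exact ⟨k, k, orth_lvec_rvec_iff.mpr ⟨hk, rfl⟩⟩
  · rintro ⟨i, j, hij⟩
    obtain ⟨hk, rfl⟩ := orth_lvec_rvec_iff.mp hij
    exact ⟨i, hk⟩

end BitOV
end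

section
/- Let l_1,…,l_n and r_1,…,r_n be d-dimensional bit vectors and let ℓ ≥ 1, p ∈ {0,1}, q ≥ 0 be integers. The diameter D of the graph G = G_{L,R,ℓ,p,q} satisfies: if some pair l_i, r_j is orthogonal then D = 6ℓ − 3p + q, and if no pair l_i, r_j is orthogonal then D = 4ℓ − 2p + q. -/
namespace GraphOV

/-- Two bit vectors (functions into `Fin 2`) are orthogonal if in every coordinate
at least one of them is `0`. -/
def Orth {d : ℕ} (a b : Fin d → Fin 2) : Prop := ∀ k, a k = 0 ∨ b k = 0

/-- A system of internally disjoint paths joining exterior vertices from `E`: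
for each path name `i : ι` we record its two endpoints and its length. -/
structure PathSys (E : Type) (ι : Type) where
  src : ι → E
  dst : ι → E
  len : ι → ℕ

namespace PathSys

variable {E ι : Type}

/-- Endpoints of zero-length paths get identified. -/
def idRel (S : PathSys E ι) (a b : E) : Prop :=
  ∃ i, S.len i = 0 ∧ S.src i = a ∧ S.dst i = b

/-- Vertices of the glued graph: exterior vertices (up to identification) together
with, for each path of length `m`, fresh interior vertices at positions `1,…,m-1`. -/
def Vert (S : PathSys E ι) : Type :=
  Quot S.idRel ⊕ Σ i : ι, {t : ℕ // 0 < t ∧ t < S.len i}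

/-- The vertex corresponding to an exterior vertex. -/
def ext (S : PathSys E ι) (a : E) : S.Vert := Sum.inl (Quot.mk _ a)

/-- The `t`-th vertex on the path named `i` (for `0 ≤ t ≤ S.len i`). -/
def pt (S : PathSys E ι) (i : ι) (t : ℕ) : S.Vert :=
  if h : 0 < t ∧ t < S.len i then Sum.inr ⟨i, t, h⟩
  else if t = 0 then S.ext (S.src i) else S.ext (S.dst i)

/-- The glued graph: consecutive vertices on each path are adjacent. -/
def graph (S : PathSys E ι) : SimpleGraph S.Vert :=
  SimpleGraph.fromRel fun a b =>
    ∃ i t, t + 1 ≤ S.len i ∧ a = S.pt i t ∧ b = S.pt i (t + 1)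

/-- The set of vertices lying on the path named `i`. -/
def onPath (S : PathSys E ι) (i : ι) : Set S.Vert :=
  {v | ∃ t ≤ S.len i, v = S.pt i t}

/-- A walk in the glued graph contains the path named `i` entirely if all vertices of
that path occur consecutively (in forward or backward order) on the walk. -/
def WalkContainsPath (S : PathSys E ι) {x y : S.Vert} (W : S.graph.Walk x y) (i : ι) : Prop :=
  ∃ a, a + S.len i ≤ W.length ∧
    ((∀ t ≤ S.len i, W.getVert (a + t) = S.pt i t) ∨
     (∀ t ≤ S.len i, W.getVert (a + t) = S.pt i (S.len i - t)))

end PathSys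

/-- The exterior vertices of the graph `G_{L,R,ℓ,p,q}`. -/
inductive Ext (n d : ℕ) : Type
  | uL : Fin n → Ext n d
  | uR : Fin n → Ext n d
  | vL : Fin n → Ext n d
  | vR : Fin n → Ext n d
  | wL : Fin d → Ext n d
  | wR : Fin d → Ext n d
  | xL : Ext n d
  | xR : Ext n d
  | yL : Ext n d
  | yR : Ext n d

/-- Names for the paths of the graph `G_{L,R,ℓ,p,q}`. -/
inductive Idx (n d : ℕ) (l r : Fin n → Fin d → Fin 2) : Type
  | uvL : Fin n → Idx n d l r
  | uvR : Fin n → Idx n d l r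
  | vxL : Fin n → Idx n d l r
  | vxR : Fin n → Idx n d l r
  | vwL : (i : Fin n) → (k : Fin d) → l i k = 1 → Idx n d l r
  | vwR : (j : Fin n) → (k : Fin d) → r j k = 1 → Idx n d l r
  | ywL : Fin d → Idx n d l r
  | ywR : Fin d → Idx n d l r
  | ww : Fin d → Idx n d l r
  | xyL : Idx n d l r
  | xyR : Idx n d l r
  | yy : Idx n d l r

/-- The path system defining the graph `G_{L,R,ℓ,p,q}`. -/
def sys (n d : ℕ) (l r : Fin n → Fin d → Fin 2) (ℓ p q : ℕ) :
    PathSys (Ext n d) (Idx n d l r) where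
  src := fun i => match i with
    | .uvL i => .uL i
    | .uvR i => .uR i
    | .vxL i => .vL i
    | .vxR i => .vR i
    | .vwL i _ _ => .vL i
    | .vwR j _ _ => .vR j
    | .ywL _ => .yL
    | .ywR _ => .yR
    | .ww k => .wL k
    | .xyL => .xL
    | .xyR => .xR
    | .yy => .yL
  dst := fun i => match i with
    | .uvL i => .vL i
    | .uvR i => .vR i
    | .vxL _ => .xL
    | .vxR _ => .xR
    | .vwL _ k _ => .wL k
    | .vwR _ k _ => .wR k
    | .ywL k => .wL k
    | .ywR k => .wR k
    | .ww k => .wR k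
    | .xyL => .yL
    | .xyR => .yR
    | .yy => .yR
  len := fun i => match i with
    | .uvL _ => ℓ - p
    | .uvR _ => ℓ - p
    | .vxL _ => ℓ
    | .vxR _ => ℓ
    | .vwL _ _ _ => ℓ
    | .vwR _ _ _ => ℓ
    | .ywL _ => ℓ
    | .ywR _ => ℓ
    | .ww _ => q
    | .xyL => ℓ - p
    | .xyR => ℓ - p
    | .yy => p + q

/-- The set `P_i^L`. -/
def PL (n d : ℕ) (l r : Fin n → Fin d → Fin 2) (ℓ p q : ℕ) (i : Fin n) :
    Set (sys n d l r ℓ p q).Vert :=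
  (sys n d l r ℓ p q).onPath (.uvL i) ∪
    ((sys n d l r ℓ p q).onPath (.vxL i) \ {(sys n d l r ℓ p q).ext .xL}) ∪
    ⋃ (k : Fin d) (h : l i k = 1),
      ((sys n d l r ℓ p q).onPath (.vwL i k h) \ {(sys n d l r ℓ p q).ext (.wL k)})

/-- The set `P_j^R`. -/
def PR (n d : ℕ) (l r : Fin n → Fin d → Fin 2) (ℓ p q : ℕ) (j : Fin n) :
    Set (sys n d l r ℓ p q).Vert :=
  (sys n d l r ℓ p q).onPath (.uvR j) ∪
    ((sys n d l r ℓ p q).onPath (.vxR j) \ {(sys n d l r ℓ p q).ext .xR}) ∪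
    ⋃ (k : Fin d) (h : r j k = 1),
      ((sys n d l r ℓ p q).onPath (.vwR j k h) \ {(sys n d l r ℓ p q).ext (.wR k)})

/-- The set `V^L`. -/
def VL (n d : ℕ) (l r : Fin n → Fin d → Fin 2) (ℓ p q : ℕ) :
    Set (sys n d l r ℓ p q).Vert := ⋃ i : Fin n, PL n d l r ℓ p q i

/-- The set `V^R`. -/
def VR (n d : ℕ) (l r : Fin n → Fin d → Fin 2) (ℓ p q : ℕ) :
    Set (sys n d l r ℓ p q).Vert := ⋃ j : Fin n, PR n d l r ℓ p q j

/-- The set `V^M` of all remaining vertices. -/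
def VM (n d : ℕ) (l r : Fin n → Fin d → Fin 2) (ℓ p q : ℕ) :
    Set (sys n d l r ℓ p q).Vert := (VL n d l r ℓ p q ∪ VR n d l r ℓ p q)ᶜ

/-!
The diameter is attained by some pair `u_i^L`, `u_j^R`. A vertex is either within `ℓ - p` of some
`v_i^L`, or within `ℓ - p` of some `v_j^R`, or a middle vertex: within `ℓ + q` of both `y^L` and
`y^R`, with these two distances adding up to at most `2ℓ + q`. A vertex near a `v_i^L` is joined
through `x^L` to any vertex near a `v_{i'}^L` and to any middle vertex, and symmetrically on the
right. Two middle vertices are joined through `y^L` or through `y^R`: since the lengths of these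
two routes add up to at most `4ℓ + 2q`, one of them is at most `2ℓ + q`. Hence only a vertex near
`v_i^L` and one near `v_j^R` can be more than `4ℓ - 2p + q` apart, and this is decided by
`dist v_i^L v_j^R`, which is at most `2ℓ + q` along `w_k^L`, `w_k^R` if `l_i[k] = r_j[k] = 1`, and
at most `4ℓ - p + q` in general.

For the lower bounds, a function on the exterior vertices that varies along each path by at most
the length of that path extends to a 1-Lipschitz function on the graph, so its differences bound
distances from below.
-/

section SimpleGraph

variable {V : Type*} {G : SimpleGraph V}

theorem dist_triangle_right_of_connected (hG : G.Connected) (u v w : V) :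
    G.dist u v ≤ G.dist u w + G.dist v w := by
  rw [G.dist_comm (u := v)]
  exact hG.dist_triangle

theorem diam_eq_of_forall_dist_le (hG : G.Connected) {M : ℕ} (hle : ∀ u v, G.dist u v ≤ M)
    {a b : V} (hab : M ≤ G.dist a b) : G.diam = M := by
  have hediam : G.ediam ≤ M := SimpleGraph.ediam_le_of_edist_le fun u v => by
    rw [← (hG u v).coe_dist_eq_edist]
    exact_mod_cast hle u v
  have hfinite : G.ediam ≠ ⊤ := ne_top_of_le_ne_top (ENat.natCast_ne_top M) hediam
  exact (ENat.toNat_le_of_le_natCast hediam).antisymm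
    (hab.trans (SimpleGraph.dist_le_diam hfinite))

theorem le_add_dist_of_forall_adj {f : V → ℕ} (hf : ∀ ⦃u v⦄, G.Adj u v → f v ≤ f u + 1)
    {a b : V} (hab : G.Reachable a b) : f b ≤ f a + G.dist a b := by
  have le_add_length {u v : V} (W : G.Walk u v) : f v ≤ f u + W.length := by
    induction W with
    | nil => simp
    | cons huv W ih =>
      rw [SimpleGraph.Walk.length_cons]
      have := hf huv
      omega
  obtain ⟨W, hW⟩ := hab.exists_walk_length_eq_dist
  exact hW ▸ le_add_length W

end SimpleGraph

namespace PathSys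

variable {E ι : Type} (S : PathSys E ι)

theorem pt_zero (i : ι) : S.pt i 0 = S.ext (S.src i) := by
  simp [pt]

theorem pt_of_pos_of_lt {i : ι} {t : ℕ} (h : 0 < t ∧ t < S.len i) :
    S.pt i t = Sum.inr ⟨i, t, h⟩ := dif_pos h

theorem pt_len (i : ι) : S.pt i (S.len i) = S.ext (S.dst i) := by
  by_cases h : S.len i = 0
  · rw [h, pt_zero]
    exact congrArg Sum.inl (Quot.sound ⟨i, h, rfl, rfl⟩)
  · simp [pt, h]

@[elab_as_elim]
theorem vert_induction {motive : S.Vert → Prop} (ext : ∀ a, motive (S.ext a))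
    (pt : ∀ i t, 0 < t → t < S.len i → motive (S.pt i t)) (z : S.Vert) : motive z := by
  rcases z with a | ⟨i, t, ht⟩
  · induction a using Quot.ind with | mk a => exact ext a
  · exact S.pt_of_pos_of_lt ht ▸ pt i t ht.1 ht.2

theorem edist_pt_le {i : ι} {s t : ℕ} (hst : s ≤ t) (ht : t ≤ S.len i) :
    S.graph.edist (S.pt i s) (S.pt i t) ≤ (t - s : ℕ) := by
  induction t, hst using Nat.le_induction with
  | base => simp
  | succ t hst ih =>
    have hstep : S.graph.edist (S.pt i t) (S.pt i (t + 1)) ≤ 1 := by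
      rw [SimpleGraph.edist_le_one_iff_adj_or_eq, or_iff_not_imp_right]
      exact fun hne => (SimpleGraph.fromRel_adj _ _ _).2 ⟨hne, .inl ⟨i, t, ht, rfl, rfl⟩⟩
    calc S.graph.edist (S.pt i s) (S.pt i (t + 1))
        ≤ S.graph.edist (S.pt i s) (S.pt i t) + S.graph.edist (S.pt i t) (S.pt i (t + 1)) :=
          SimpleGraph.edist_triangle
      _ ≤ (t - s : ℕ) + 1 := add_le_add (ih (by omega)) hstep
      _ = (t + 1 - s : ℕ) := by rw [Nat.sub_add_comm hst, Nat.cast_add_one]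

theorem dist_pt_le {i : ι} {s t : ℕ} (hst : s ≤ t) (ht : t ≤ S.len i) :
    S.graph.dist (S.pt i s) (S.pt i t) ≤ t - s :=
  ENat.toNat_le_of_le_natCast (S.edist_pt_le hst ht)

theorem reachable_src_pt {i : ι} {t : ℕ} (ht : t ≤ S.len i) :
    S.graph.Reachable (S.ext (S.src i)) (S.pt i t) := by
  rw [← pt_zero]
  exact SimpleGraph.reachable_of_edist_ne_top
    (ne_top_of_le_ne_top (ENat.natCast_ne_top _) (S.edist_pt_le t.zero_le ht))

theorem reachable_src_dst (i : ι) : S.graph.Reachable (S.ext (S.src i)) (S.ext (S.dst i)) :=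
  S.pt_len i ▸ S.reachable_src_pt le_rfl

theorem dist_pt_src_le {i : ι} {t : ℕ} (ht : t ≤ S.len i) :
    S.graph.dist (S.pt i t) (S.ext (S.src i)) ≤ t := by
  rw [← pt_zero, SimpleGraph.dist_comm]
  exact S.dist_pt_le t.zero_le ht

theorem dist_pt_dst_le {i : ι} {t : ℕ} (ht : t ≤ S.len i) :
    S.graph.dist (S.pt i t) (S.ext (S.dst i)) ≤ S.len i - t := by
  rw [← pt_len]
  exact S.dist_pt_le ht le_rfl

theorem dist_src_dst_le (i : ι) : S.graph.dist (S.ext (S.src i)) (S.ext (S.dst i)) ≤ S.len i := by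
  rw [← pt_zero]
  exact S.dist_pt_dst_le (Nat.zero_le _)

variable {S}

theorem connected_of_forall_reachable_ext (a : E)
    (h : ∀ b, S.graph.Reachable (S.ext b) (S.ext a)) : S.graph.Connected := by
  have hreach (z : S.Vert) : S.graph.Reachable z (S.ext a) := by
    induction z using S.vert_induction with
    | ext b => exact h b
    | pt i t _ ht => exact (S.reachable_src_pt ht.le).symm.trans (h _)
  exact { preconnected := fun u v => (hreach u).trans (hreach v).symm, nonempty := ⟨S.ext a⟩ }

theorem dist_dst_le_dist_src_add (hS : S.graph.Connected) (z : S.Vert) (i : ι) :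
    S.graph.dist z (S.ext (S.dst i)) ≤ S.graph.dist z (S.ext (S.src i)) + S.len i :=
  hS.dist_triangle.trans (Nat.add_le_add_left (S.dist_src_dst_le i) _)

theorem dist_src_le_dist_dst_add (hS : S.graph.Connected) (z : S.Vert) (i : ι) :
    S.graph.dist z (S.ext (S.src i)) ≤ S.graph.dist z (S.ext (S.dst i)) + S.len i :=
  (dist_triangle_right_of_connected hS _ _ _).trans
    (Nat.add_le_add_left (S.dist_src_dst_le i) _)

/-- A potential is a function on the exterior vertices that changes along each path by at most the
length of the path. Potentials are natural-number valued; only their differences matter. -/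
def IsPotential (S : PathSys E ι) (F : E → ℕ) : Prop :=
  ∀ i, F (S.dst i) ≤ F (S.src i) + S.len i ∧ F (S.src i) ≤ F (S.dst i) + S.len i

namespace IsPotential

variable {F : E → ℕ}

/-- The McShane extension of a potential to all vertices: the largest 1-Lipschitz function on each
path with the prescribed values at the two endpoints. -/
def extension (hF : S.IsPotential F) : S.Vert → ℕ
  | .inl a => a.lift F <| by
      rintro _ _ ⟨i, hi, rfl, rfl⟩
      have := hF i
      omega
  | .inr ⟨i, t, _⟩ => min (F (S.src i) + t) (F (S.dst i) + (S.len i - t))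

theorem extension_ext (hF : S.IsPotential F) (a : E) : hF.extension (S.ext a) = F a := rfl

theorem extension_pt (hF : S.IsPotential F) {i : ι} {t : ℕ} (ht : t ≤ S.len i) :
    hF.extension (S.pt i t) = min (F (S.src i) + t) (F (S.dst i) + (S.len i - t)) := by
  have := hF i
  rcases t.eq_zero_or_pos with rfl | hpos
  · rw [pt_zero, extension_ext]
    omega
  rcases ht.eq_or_lt with rfl | hlt
  · rw [pt_len, extension_ext]
    omega
  · rw [S.pt_of_pos_of_lt ⟨hpos, hlt⟩]
    rfl

theorem extension_le_add_one (hF : S.IsPotential F) {u v : S.Vert} (huv : S.graph.Adj u v) :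
    hF.extension v ≤ hF.extension u + 1 := by
  rcases ((SimpleGraph.fromRel_adj _ _ _).1 huv).2 with
    ⟨i, t, ht, rfl, rfl⟩ | ⟨i, t, ht, rfl, rfl⟩ <;>
  · rw [hF.extension_pt ht, hF.extension_pt (Nat.le_of_succ_le ht)]
    omega

theorem le_add_dist (hF : S.IsPotential F) {a b : E}
    (hab : S.graph.Reachable (S.ext a) (S.ext b)) :
    F b ≤ F a + S.graph.dist (S.ext a) (S.ext b) :=
  le_add_dist_of_forall_adj (fun _ _ => hF.extension_le_add_one) hab

end IsPotential

end PathSys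

theorem not_orth_iff {d : ℕ} {a b : Fin d → Fin 2} : ¬ Orth a b ↔ ∃ k, a k = 1 ∧ b k = 1 := by
  have ne_zero_iff (x : Fin 2) : x ≠ 0 ↔ x = 1 := by omega
  simp only [Orth, not_forall, not_or, ne_zero_iff]

section Distances

variable {n d ℓ p q : ℕ} {l r : Fin n → Fin d → Fin 2}

open PathSys

local notation "𝓢" => sys n d l r ℓ p q
local notation "δ" => SimpleGraph.dist (graph 𝓢)
local notation "ε" => PathSys.ext 𝓢

theorem sys_connected : (graph 𝓢).Connected := by
  have hyR : (graph 𝓢).Reachable (ε .yR) (ε .yL) := (reachable_src_dst 𝓢 .yy).symm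
  have hxL : (graph 𝓢).Reachable (ε .xL) (ε .yL) := reachable_src_dst 𝓢 .xyL
  have hxR : (graph 𝓢).Reachable (ε .xR) (ε .yL) := (reachable_src_dst 𝓢 .xyR).trans hyR
  have hvL (i) : (graph 𝓢).Reachable (ε (.vL i)) (ε .yL) :=
    (reachable_src_dst 𝓢 (.vxL i)).trans hxL
  have hvR (j) : (graph 𝓢).Reachable (ε (.vR j)) (ε .yL) :=
    (reachable_src_dst 𝓢 (.vxR j)).trans hxR
  refine connected_of_forall_reachable_ext .yL fun a => ?_
  cases a with
  | uL i => exact (reachable_src_dst 𝓢 (.uvL i)).trans (hvL i)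
  | uR j => exact (reachable_src_dst 𝓢 (.uvR j)).trans (hvR j)
  | vL i => exact hvL i
  | vR j => exact hvR j
  | wL k => exact (reachable_src_dst 𝓢 (.ywL k)).symm
  | wR k => exact (reachable_src_dst 𝓢 (.ywR k)).symm.trans hyR
  | xL => exact hxL
  | xR => exact hxR
  | yL => exact .refl _
  | yR => exact hyR

theorem dist_yR_le_dist_yL_add (z : Vert 𝓢) : δ z (ε .yR) ≤ δ z (ε .yL) + (p + q) :=
  dist_dst_le_dist_src_add sys_connected z .yy

theorem dist_yL_le_dist_yR_add (z : Vert 𝓢) : δ z (ε .yL) ≤ δ z (ε .yR) + (p + q) :=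
  dist_src_le_dist_dst_add sys_connected z .yy

theorem dist_xL_le_dist_yL_add (z : Vert 𝓢) : δ z (ε .xL) ≤ δ z (ε .yL) + (ℓ - p) :=
  dist_src_le_dist_dst_add sys_connected z .xyL

theorem dist_xR_le_dist_yR_add (z : Vert 𝓢) : δ z (ε .xR) ≤ δ z (ε .yR) + (ℓ - p) :=
  dist_src_le_dist_dst_add sys_connected z .xyR

theorem dist_yL_le_dist_wL_add (z : Vert 𝓢) (k : Fin d) :
    δ z (ε .yL) ≤ δ z (ε (.wL k)) + ℓ :=
  dist_src_le_dist_dst_add sys_connected z (.ywL k)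

theorem dist_yR_le_dist_wR_add (z : Vert 𝓢) (k : Fin d) :
    δ z (ε .yR) ≤ δ z (ε (.wR k)) + ℓ :=
  dist_src_le_dist_dst_add sys_connected z (.ywR k)

theorem dist_vL_vR_le (hp : p ≤ ℓ) (i j : Fin n) :
    δ (ε (.vL i)) (ε (.vR j)) ≤ 4 * ℓ - p + q := by
  have hxL : δ (ε (.vL i)) (ε .xL) ≤ ℓ := dist_src_dst_le 𝓢 (.vxL i)
  have hyL : δ (ε (.vL i)) (ε .yL) ≤ δ (ε (.vL i)) (ε .xL) + (ℓ - p) :=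
    dist_dst_le_dist_src_add sys_connected _ .xyL
  have hyR := dist_yR_le_dist_yL_add (ε (.vL i))
  have hxR := dist_xR_le_dist_yR_add (ε (.vL i))
  have hvR : δ (ε (.vL i)) (ε (.vR j)) ≤ δ (ε (.vL i)) (ε .xR) + ℓ :=
    dist_src_le_dist_dst_add sys_connected _ (.vxR j)
  omega

theorem dist_vL_vR_le_of_not_orth {i j : Fin n} (hij : ¬ Orth (l i) (r j)) :
    δ (ε (.vL i)) (ε (.vR j)) ≤ 2 * ℓ + q := by
  obtain ⟨k, hl, hr⟩ := not_orth_iff.1 hij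
  have hwL : δ (ε (.vL i)) (ε (.wL k)) ≤ ℓ := dist_src_dst_le 𝓢 (.vwL i k hl)
  have hwR : δ (ε (.vL i)) (ε (.wR k)) ≤ δ (ε (.vL i)) (ε (.wL k)) + q :=
    dist_dst_le_dist_src_add sys_connected _ (.ww k)
  have hvR : δ (ε (.vL i)) (ε (.vR j)) ≤ δ (ε (.vL i)) (ε (.wR k)) + ℓ :=
    dist_src_le_dist_dst_add sys_connected _ (.vwR j k hr)
  omega

/-- The distance bounds shared by all vertices in the middle part `V^M` of the graph, which are
those on the paths among the `w_k^L`, `w_k^R`, `x^L`, `x^R`, `y^L` and `y^R`. -/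
structure IsMiddle (z : Vert 𝓢) : Prop where
  dist_yL_le : δ z (ε .yL) ≤ ℓ + q
  dist_yR_le : δ z (ε .yR) ≤ ℓ + q
  dist_yL_add_dist_yR_le : δ z (ε .yL) + δ z (ε .yR) ≤ 2 * ℓ + q

theorem isMiddle_of_dist_yL_le (hp : p ≤ ℓ) {z : Vert 𝓢}
    (hz : δ z (ε .yL) ≤ ℓ - p) : IsMiddle z := by
  have := dist_yR_le_dist_yL_add z
  constructor <;> omega

theorem isMiddle_of_dist_yR_le (hp : p ≤ ℓ) {z : Vert 𝓢}
    (hz : δ z (ε .yR) ≤ ℓ - p) : IsMiddle z := by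
  have := dist_yL_le_dist_yR_add z
  constructor <;> omega

theorem isMiddle_pt_yy (hp : p ≤ ℓ) {t : ℕ} (ht : t ≤ p + q) : IsMiddle (pt 𝓢 .yy t) := by
  have hyL : δ (pt 𝓢 .yy t) (ε .yL) ≤ t := dist_pt_src_le 𝓢 ht
  have hyR : δ (pt 𝓢 .yy t) (ε .yR) ≤ p + q - t := dist_pt_dst_le 𝓢 ht
  constructor <;> omega

theorem isMiddle_pt_ww {k : Fin d} {t : ℕ} (ht : t ≤ q) : IsMiddle (pt 𝓢 (.ww k) t) := by
  have hwL : δ (pt 𝓢 (.ww k) t) (ε (.wL k)) ≤ t := dist_pt_src_le 𝓢 ht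
  have hwR : δ (pt 𝓢 (.ww k) t) (ε (.wR k)) ≤ q - t := dist_pt_dst_le 𝓢 ht
  have hyL := dist_yL_le_dist_wL_add (pt 𝓢 (.ww k) t) k
  have hyR := dist_yR_le_dist_wR_add (pt 𝓢 (.ww k) t) k
  constructor <;> omega

theorem exists_dist_vL_le_or_exists_dist_vR_le_or_isMiddle_ext (hp : p ≤ ℓ) (a : Ext n d) :
    (∃ i, δ (ε a) (ε (.vL i)) ≤ ℓ - p) ∨
      (∃ j, δ (ε a) (ε (.vR j)) ≤ ℓ - p) ∨ IsMiddle (ε a) := by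
  cases a with
  | uL i => exact .inl ⟨i, dist_src_dst_le 𝓢 (.uvL i)⟩
  | uR j => exact .inr (.inl ⟨j, dist_src_dst_le 𝓢 (.uvR j)⟩)
  | vL i => exact .inl ⟨i, by simp⟩
  | vR j => exact .inr (.inl ⟨j, by simp⟩)
  | wL k => exact .inr (.inr (pt_zero 𝓢 (.ww k) ▸ isMiddle_pt_ww q.zero_le))
  | wR k => exact .inr (.inr (pt_len 𝓢 (.ww k) ▸ isMiddle_pt_ww le_rfl))
  | xL => exact .inr (.inr (isMiddle_of_dist_yL_le hp (dist_src_dst_le 𝓢 .xyL)))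
  | xR => exact .inr (.inr (isMiddle_of_dist_yR_le hp (dist_src_dst_le 𝓢 .xyR)))
  | yL => exact .inr (.inr (isMiddle_of_dist_yL_le hp (by simp)))
  | yR => exact .inr (.inr (isMiddle_of_dist_yR_le hp (by simp)))

theorem exists_dist_vL_le_or_exists_dist_vR_le_or_isMiddle (hℓ : 1 ≤ ℓ) (hp : p ≤ 1)
    (z : Vert 𝓢) :
    (∃ i, δ z (ε (.vL i)) ≤ ℓ - p) ∨
      (∃ j, δ z (ε (.vR j)) ≤ ℓ - p) ∨ IsMiddle z := by
  have hpℓ : p ≤ ℓ := hp.trans hℓ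
  -- An interior vertex of a path of length `ℓ` is at distance at most `ℓ - 1` from its source.
  have le_sub_of_lt {t : ℕ} (ht : t < ℓ) : t ≤ ℓ - p := by omega
  induction z using vert_induction with
  | ext a => exact exists_dist_vL_le_or_exists_dist_vR_le_or_isMiddle_ext hpℓ a
  | pt i t _ ht =>
    have hsrc := dist_pt_src_le 𝓢 ht.le
    have hdst := (dist_pt_dst_le 𝓢 ht.le).trans (Nat.sub_le _ _)
    cases i with
    | uvL i => exact .inl ⟨i, hdst⟩
    | uvR j => exact .inr (.inl ⟨j, hdst⟩)
    | vxL i => exact .inl ⟨i, hsrc.trans (le_sub_of_lt ht)⟩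
    | vxR j => exact .inr (.inl ⟨j, hsrc.trans (le_sub_of_lt ht)⟩)
    | vwL i => exact .inl ⟨i, hsrc.trans (le_sub_of_lt ht)⟩
    | vwR j => exact .inr (.inl ⟨j, hsrc.trans (le_sub_of_lt ht)⟩)
    | ywL => exact .inr (.inr (isMiddle_of_dist_yL_le hpℓ (hsrc.trans (le_sub_of_lt ht))))
    | ywR => exact .inr (.inr (isMiddle_of_dist_yR_le hpℓ (hsrc.trans (le_sub_of_lt ht))))
    | ww => exact .inr (.inr (isMiddle_pt_ww ht.le))
    | xyL => exact .inr (.inr (isMiddle_of_dist_yL_le hpℓ hdst))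
    | xyR => exact .inr (.inr (isMiddle_of_dist_yR_le hpℓ hdst))
    | yy => exact .inr (.inr (isMiddle_pt_yy hpℓ ht.le))

theorem dist_le_of_dist_vL_le_of_dist_vR_le {M : ℕ} {z z' : Vert 𝓢} {i j : Fin n}
    (hM : δ (ε (.vL i)) (ε (.vR j)) + 2 * (ℓ - p) ≤ M)
    (hz : δ z (ε (.vL i)) ≤ ℓ - p) (hz' : δ z' (ε (.vR j)) ≤ ℓ - p) : δ z z' ≤ M := by
  have hzv : δ z (ε (.vR j)) ≤ δ z (ε (.vL i)) + δ (ε (.vL i)) (ε (.vR j)) :=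
    sys_connected.dist_triangle
  have hzz' := dist_triangle_right_of_connected sys_connected z z' (ε (.vR j))
  omega

theorem dist_xL_le_of_dist_vL_le (hp : p ≤ ℓ) {z : Vert 𝓢} {i : Fin n}
    (hz : δ z (ε (.vL i)) ≤ ℓ - p) : δ z (ε .xL) ≤ 2 * ℓ - p := by
  have hxL : δ z (ε .xL) ≤ δ z (ε (.vL i)) + ℓ :=
    dist_dst_le_dist_src_add sys_connected z (.vxL i)
  omega

theorem dist_xR_le_of_dist_vR_le (hp : p ≤ ℓ) {z : Vert 𝓢} {j : Fin n}
    (hz : δ z (ε (.vR j)) ≤ ℓ - p) : δ z (ε .xR) ≤ 2 * ℓ - p := by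
  have hxR : δ z (ε .xR) ≤ δ z (ε (.vR j)) + ℓ :=
    dist_dst_le_dist_src_add sys_connected z (.vxR j)
  omega

theorem IsMiddle.dist_le (hp : p ≤ ℓ) {z z' : Vert 𝓢} (hz : IsMiddle z) (hz' : IsMiddle z') :
    δ z z' ≤ 4 * ℓ - 2 * p + q := by
  have hyL := dist_triangle_right_of_connected sys_connected z z' (ε .yL)
  have hyR := dist_triangle_right_of_connected sys_connected z z' (ε .yR)
  have := hz.dist_yL_add_dist_yR_le
  have := hz'.dist_yL_add_dist_yR_le
  omega

theorem IsMiddle.dist_xL_le (hp : p ≤ ℓ) {z : Vert 𝓢} (hz : IsMiddle z) :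
    δ z (ε .xL) ≤ 2 * ℓ - p + q := by
  have := dist_xL_le_dist_yL_add z
  have := hz.dist_yL_le
  omega

theorem IsMiddle.dist_xR_le (hp : p ≤ ℓ) {z : Vert 𝓢} (hz : IsMiddle z) :
    δ z (ε .xR) ≤ 2 * ℓ - p + q := by
  have := dist_xR_le_dist_yR_add z
  have := hz.dist_yR_le
  omega

theorem dist_le_of_forall_dist_vL_vR_le (hℓ : 1 ≤ ℓ) (hp : p ≤ 1) {M : ℕ}
    (hM : 4 * ℓ - 2 * p + q ≤ M)
    (hv : ∀ i j, δ (ε (.vL i)) (ε (.vR j)) + 2 * (ℓ - p) ≤ M)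
    (z z' : Vert 𝓢) : δ z z' ≤ M := by
  have hpℓ : p ≤ ℓ := hp.trans hℓ
  have via_xL := dist_triangle_right_of_connected sys_connected z z' (ε .xL)
  have via_xR := dist_triangle_right_of_connected sys_connected z z' (ε .xR)
  rcases exists_dist_vL_le_or_exists_dist_vR_le_or_isMiddle hℓ hp z with
    ⟨i, hz⟩ | ⟨j, hz⟩ | hz <;>
  rcases exists_dist_vL_le_or_exists_dist_vR_le_or_isMiddle hℓ hp z' with
    ⟨i', hz'⟩ | ⟨j', hz'⟩ | hz'
  · have := dist_xL_le_of_dist_vL_le hpℓ hz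
    have := dist_xL_le_of_dist_vL_le hpℓ hz'
    omega
  · exact dist_le_of_dist_vL_le_of_dist_vR_le (hv i j') hz hz'
  · have := dist_xL_le_of_dist_vL_le hpℓ hz
    have := hz'.dist_xL_le hpℓ
    omega
  · rw [SimpleGraph.dist_comm]
    exact dist_le_of_dist_vL_le_of_dist_vR_le (hv i' j) hz' hz
  · have := dist_xR_le_of_dist_vR_le hpℓ hz
    have := dist_xR_le_of_dist_vR_le hpℓ hz'
    omega
  · have := dist_xR_le_of_dist_vR_le hpℓ hz
    have := hz'.dist_xR_le hpℓ
    omega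
  · have := hz.dist_xL_le hpℓ
    have := dist_xL_le_of_dist_vL_le hpℓ hz'
    omega
  · have := hz.dist_xR_le hpℓ
    have := dist_xR_le_of_dist_vR_le hpℓ hz'
    omega
  · exact (hz.dist_le hpℓ hz').trans hM

/-- The potential that projects the graph onto a line from the `u_i^L` to the `u_j^R`. -/
def levelPotential (n d ℓ p q : ℕ) : Ext n d → ℕ
  | .uL _ => 0
  | .vL _ => ℓ - p
  | .xL | .yL | .wL _ => 2 * ℓ - p
  | .xR | .yR | .wR _ => 2 * ℓ - p + q
  | .vR _ => 3 * ℓ - p + q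
  | .uR _ => 4 * ℓ - 2 * p + q

/-- A potential measuring the distance from `u_i^L`, up to truncation away from `u_j^R`, in case
`l i` and `r j` are orthogonal: then the neighbours `w_k^R` of `v_j^R` all have `l_i[k] = 0`. -/
def orthPotential (ℓ p q : ℕ) (l : Fin n → Fin d → Fin 2) (i j : Fin n) : Ext n d → ℕ
  | .uL a => if a = i then 0 else 3 * ℓ - p
  | .vL a => if a = i then ℓ - p else 3 * ℓ - p
  | .xL => 2 * ℓ - p
  | .yL => 3 * ℓ - 2 * p
  | .wL k => if l i k = 1 then 2 * ℓ - p else 4 * ℓ - 2 * p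
  | .wR k => if l i k = 1 then 2 * ℓ - p + q else 4 * ℓ - 2 * p + q
  | .xR => 4 * ℓ - 2 * p + q
  | .yR => 3 * ℓ - p + q
  | .vR b => if b = j then 5 * ℓ - 2 * p + q else 3 * ℓ - p + q
  | .uR b => if b = j then 6 * ℓ - 3 * p + q else 3 * ℓ - p + q

theorem isPotential_levelPotential (hp : p ≤ ℓ) : IsPotential 𝓢 (levelPotential n d ℓ p q) := by
  intro c
  cases c <;> simp only [sys, levelPotential] <;> omega

theorem isPotential_orthPotential (hp : p ≤ ℓ) {i j : Fin n} (hij : Orth (l i) (r j)) :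
    IsPotential 𝓢 (orthPotential ℓ p q l i j) := by
  intro c
  cases c with
  | vwL a k hk =>
    simp only [sys, orthPotential]
    by_cases ha : a = i
    · subst ha
      simp only [hk, if_true]
      omega
    · split_ifs <;> omega
  | vwR b k hk =>
    have hne : b = j → l i k ≠ 1 := by
      rintro rfl hl
      exact not_orth_iff.2 ⟨k, hl, hk⟩ hij
    simp only [sys, orthPotential]
    split_ifs with hl hb <;> first | exact absurd hl (hne hb) | omega
  | _ => simp only [sys, orthPotential]; (try split_ifs) <;> omega

theorem le_dist_uL_uR (hp : p ≤ ℓ) (i j : Fin n) :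
    4 * ℓ - 2 * p + q ≤ δ (ε (.uL i)) (ε (.uR j)) := by
  have := (isPotential_levelPotential (l := l) (r := r) (q := q) hp).le_add_dist
    (a := .uL i) (b := .uR j) (sys_connected.preconnected _ _)
  simpa only [levelPotential, zero_add] using this

theorem le_dist_uL_uR_of_orth (hp : p ≤ ℓ) {i j : Fin n} (hij : Orth (l i) (r j)) :
    6 * ℓ - 3 * p + q ≤ δ (ε (.uL i)) (ε (.uR j)) := by
  have := (isPotential_orthPotential (q := q) hp hij).le_add_dist
    (a := .uL i) (b := .uR j) (sys_connected.preconnected _ _)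
  simpa only [orthPotential, if_true, zero_add] using this

end Distances

theorem diameter_of_G (n d ℓ p q : ℕ) (hn : 1 ≤ n) (hd : 1 ≤ d) (hℓ : 1 ≤ ℓ)
    (hp : p ≤ 1) (l r : Fin n → Fin d → Fin 2) :
    ((∃ i j, Orth (l i) (r j)) →
      (sys n d l r ℓ p q).graph.diam = 6 * ℓ - 3 * p + q) ∧
    ((∀ i j, ¬ Orth (l i) (r j)) →
      (sys n d l r ℓ p q).graph.diam = 4 * ℓ - 2 * p + q) := by
  have hpℓ : p ≤ ℓ := hp.trans hℓ
  constructor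
  · rintro ⟨i, j, hij⟩
    refine diam_eq_of_forall_dist_le sys_connected
      (dist_le_of_forall_dist_vL_vR_le hℓ hp (by omega) fun a b => ?_)
      (le_dist_uL_uR_of_orth hpℓ hij)
    have := dist_vL_vR_le (l := l) (r := r) (q := q) hpℓ a b
    omega
  · intro hno
    refine diam_eq_of_forall_dist_le sys_connected
      (dist_le_of_forall_dist_vL_vR_le hℓ hp le_rfl fun a b => ?_)
      (le_dist_uL_uR hpℓ ⟨0, hn⟩ ⟨0, hn⟩)
    have := dist_vL_vR_le_of_not_orth (ℓ := ℓ) (p := p) (q := q) (hno a b)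
    omega

end GraphOV
end

section
/- Let l_1,…,l_n and r_1,…,r_n be d-dimensional bit vectors and let ℓ ≥ 1, p ∈ {0,1}, q ≥ 0 be integers, and let G = G_{L,R,ℓ,p,q}. For every pair of vertices s, t ∈ V^M, dist_G(s, t) ≤ 4ℓ − 2p + q; more specifically, dist_G(x^L, v) ≤ 2ℓ − p + q and dist_G(v, x^R) ≤ 2ℓ − p + q for every vertex v ∈ V^M. -/
namespace GraphOV

/-!
Every middle vertex lies on one of the paths between `x`, `y` and `w` vertices. For such a vertex
`v` the crossing length `q` splits as `q = a + b` so that `dist(x^L, v) ≤ 2ℓ - p + a` and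
`dist(x^R, v) ≤ 2ℓ - p + b`. Given two middle vertices with splittings `q = a₁ + b₁ = a₂ + b₂`, one
of `a₁ + a₂` and `b₁ + b₂` is at most `q`, so the detour through `x^L` or the one through `x^R` has
length at most `2(2ℓ - p) + q`.
-/

section Graph

variable {V : Type*} {G : SimpleGraph V}

theorem edist_le_of_add_le {u v w : V} {a b c : ℕ} (huv : G.edist u v ≤ a)
    (hvw : G.edist v w ≤ b) (habc : a + b ≤ c) : G.edist u w ≤ c :=
  calc G.edist u w ≤ G.edist u v + G.edist v w := G.edist_triangle
    _ ≤ a + b := add_le_add huv hvw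
    _ ≤ c := mod_cast habc

theorem edist_le_of_le {u v : V} {a b : ℕ} (huv : G.edist u v ≤ a) (hab : a ≤ b) :
    G.edist u v ≤ b :=
  huv.trans (mod_cast hab)

/-- The vertex `v` is within distance `c + a` of `x` and `c + b` of `y` for some splitting
`a + b = q`. For the graph `G_{L,R,ℓ,p,q}` this is used with `x = x^L`, `y = x^R` and
`c = 2ℓ - p`. Extended distances are used so that the bounds include reachability. -/
def IsBalanced (G : SimpleGraph V) (x y : V) (c q : ℕ) (v : V) : Prop :=
  ∃ a b : ℕ, a + b = q ∧ G.edist x v ≤ (c + a : ℕ) ∧ G.edist y v ≤ (c + b : ℕ)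

namespace IsBalanced

variable {x y s t v : V} {c q : ℕ}

theorem symm (h : IsBalanced G x y c q v) : IsBalanced G y x c q v := by
  obtain ⟨a, b, hab, hx, hy⟩ := h
  exact ⟨b, a, by omega, hy, hx⟩

theorem of_edist_le (hx : G.edist x v ≤ c) (hy : G.edist y v ≤ (c + q : ℕ)) :
    IsBalanced G x y c q v :=
  ⟨0, q, by omega, hx, hy⟩

theorem edist_left_le (h : IsBalanced G x y c q v) : G.edist x v ≤ (c + q : ℕ) := by
  obtain ⟨a, b, hab, hx, -⟩ := h
  exact edist_le_of_le hx (by omega)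

theorem edist_le (hs : IsBalanced G x y c q s) (ht : IsBalanced G x y c q t) :
    G.edist s t ≤ (2 * c + q : ℕ) := by
  obtain ⟨a₁, b₁, hs_split, hxs, hys⟩ := hs
  obtain ⟨a₂, b₂, ht_split, hxt, hyt⟩ := ht
  rw [SimpleGraph.edist_comm] at hxs hys
  rcases (by omega : a₁ + a₂ ≤ q ∨ b₁ + b₂ ≤ q) with ha | hb
  · exact edist_le_of_add_le hxs hxt (by omega)
  · exact edist_le_of_add_le hys hyt (by omega)

end IsBalanced

end Graph

namespace PathSys

variable {E ι : Type} (S : PathSys E ι)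

theorem pt_eq_inr (i : ι) {t : ℕ} (ht : 0 < t ∧ t < S.len i) :
    S.pt i t = (Sum.inr ⟨i, t, ht⟩ : S.Vert) := by
  unfold pt
  exact dif_pos ht

theorem src_mem_onPath (i : ι) : S.ext (S.src i) ∈ S.onPath i :=
  ⟨0, Nat.zero_le _, (S.pt_zero i).symm⟩

theorem dst_mem_onPath (i : ι) : S.ext (S.dst i) ∈ S.onPath i :=
  ⟨S.len i, le_rfl, (S.pt_len i).symm⟩

theorem inr_mem_onPath (i : ι) (t : {t : ℕ // 0 < t ∧ t < S.len i}) :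
    (Sum.inr ⟨i, t⟩ : S.Vert) ∈ S.onPath i :=
  ⟨t, t.2.2.le, (S.pt_eq_inr i t.2).symm⟩

theorem inr_mem_onPath_diff_ext (i : ι) (t : {t : ℕ // 0 < t ∧ t < S.len i}) (e : E) :
    (Sum.inr ⟨i, t⟩ : S.Vert) ∈ S.onPath i \ {S.ext e} :=
  ⟨S.inr_mem_onPath i t, Sum.inr_ne_inl⟩

theorem edist_pt_succ_le_one {i : ι} {t : ℕ} (ht : t + 1 ≤ S.len i) :
    S.graph.edist (S.pt i t) (S.pt i (t + 1)) ≤ 1 := by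
  rw [SimpleGraph.edist_le_one_iff_adj_or_eq, graph, SimpleGraph.fromRel_adj]
  by_cases h : S.pt i t = S.pt i (t + 1)
  · exact Or.inr h
  · exact Or.inl ⟨h, Or.inl ⟨i, t, ht, rfl, rfl⟩⟩

theorem edist_pt_add_le {i : ι} {t a : ℕ} (h : t + a ≤ S.len i) :
    S.graph.edist (S.pt i t) (S.pt i (t + a)) ≤ a := by
  induction a with
  | zero => simp
  | succ a ih =>
    exact edist_le_of_add_le (ih (by omega))
      (mod_cast S.edist_pt_succ_le_one (t := t + a) (by omega)) le_rfl

theorem edist_src_dst_le (i : ι) : S.graph.edist (S.ext (S.src i)) (S.ext (S.dst i)) ≤ S.len i := by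
  simpa [pt_zero, pt_len] using S.edist_pt_add_le (i := i) (t := 0) (a := S.len i) (by omega)

variable {S}

theorem exists_edist_le_of_mem_onPath {i : ι} {v : S.Vert} (hv : v ∈ S.onPath i) :
    ∃ a b : ℕ, a + b = S.len i ∧ S.graph.edist (S.ext (S.src i)) v ≤ a ∧
      S.graph.edist (S.ext (S.dst i)) v ≤ b := by
  obtain ⟨t, ht, rfl⟩ := hv
  refine ⟨t, S.len i - t, by omega, ?_, ?_⟩
  · simpa [pt_zero] using S.edist_pt_add_le (i := i) (t := 0) (a := t) (by omega)
  · rw [SimpleGraph.edist_comm, ← S.pt_len]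
    simpa [ht] using S.edist_pt_add_le (i := i) (t := t) (a := S.len i - t) (by omega)

end PathSys

section Middle

variable {n d ℓ p q : ℕ} {l r : Fin n → Fin d → Fin 2}

/-- The middle paths of `G_{L,R,ℓ,p,q}`, namely those with no endpoint among the `u` and `v`
vertices; together they cover `V^M`. -/
def Idx.IsMiddle : Idx n d l r → Prop
  | .uvL _ | .uvR _ | .vxL _ | .vxR _ | .vwL _ _ _ | .vwR _ _ _ => False
  | .ywL _ | .ywR _ | .ww _ | .xyL | .xyR | .yy => True

local notation "𝒮" => sys n d l r ℓ p q

theorem onPath_uvL_subset_VL (i : Fin n) : (𝒮).onPath (.uvL i) ⊆ VL n d l r ℓ p q :=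
  fun _ hv => Set.mem_iUnion.2 ⟨i, Or.inl (Or.inl hv)⟩

theorem onPath_uvR_subset_VR (j : Fin n) : (𝒮).onPath (.uvR j) ⊆ VR n d l r ℓ p q :=
  fun _ hv => Set.mem_iUnion.2 ⟨j, Or.inl (Or.inl hv)⟩

theorem inr_mem_VL_union_VR {i : Idx n d l r} (hi : ¬ i.IsMiddle)
    (t : {t : ℕ // 0 < t ∧ t < (𝒮).len i}) :
    (Sum.inr ⟨i, t⟩ : (𝒮).Vert) ∈ VL n d l r ℓ p q ∪ VR n d l r ℓ p q := by
  have hmem := (𝒮).inr_mem_onPath i t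
  have hdiff := (𝒮).inr_mem_onPath_diff_ext i t
  cases i with
  | uvL i => exact Or.inl (onPath_uvL_subset_VL i hmem)
  | uvR j => exact Or.inr (onPath_uvR_subset_VR j hmem)
  | vxL i => exact Or.inl (Set.mem_iUnion.2 ⟨i, Or.inl (Or.inr (hdiff _))⟩)
  | vxR j => exact Or.inr (Set.mem_iUnion.2 ⟨j, Or.inl (Or.inr (hdiff _))⟩)
  | vwL i k h =>
    exact Or.inl (Set.mem_iUnion.2 ⟨i, Or.inr (Set.mem_iUnion₂.2 ⟨k, h, hdiff _⟩)⟩)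
  | vwR j k h =>
    exact Or.inr (Set.mem_iUnion.2 ⟨j, Or.inr (Set.mem_iUnion₂.2 ⟨k, h, hdiff _⟩)⟩)
  | _ => exact absurd trivial hi

theorem exists_isMiddle_mem_onPath {v : (𝒮).Vert} (hv : v ∈ VM n d l r ℓ p q) :
    ∃ i : Idx n d l r, i.IsMiddle ∧ v ∈ (𝒮).onPath i := by
  rcases v with e | ⟨i, t⟩
  · induction e using Quot.ind with | _ e
    cases e with
    | uL i => exact absurd (Or.inl (onPath_uvL_subset_VL i ((𝒮).src_mem_onPath (.uvL i)))) hv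
    | uR j => exact absurd (Or.inr (onPath_uvR_subset_VR j ((𝒮).src_mem_onPath (.uvR j)))) hv
    | vL i => exact absurd (Or.inl (onPath_uvL_subset_VL i ((𝒮).dst_mem_onPath (.uvL i)))) hv
    | vR j => exact absurd (Or.inr (onPath_uvR_subset_VR j ((𝒮).dst_mem_onPath (.uvR j)))) hv
    | wL k => exact ⟨.ywL k, trivial, (𝒮).dst_mem_onPath (.ywL k)⟩
    | wR k => exact ⟨.ywR k, trivial, (𝒮).dst_mem_onPath (.ywR k)⟩
    | xL => exact ⟨.xyL, trivial, (𝒮).src_mem_onPath .xyL⟩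
    | xR => exact ⟨.xyR, trivial, (𝒮).src_mem_onPath .xyR⟩
    | yL => exact ⟨.xyL, trivial, (𝒮).dst_mem_onPath .xyL⟩
    | yR => exact ⟨.xyR, trivial, (𝒮).dst_mem_onPath .xyR⟩
  · by_cases hi : i.IsMiddle
    · exact ⟨i, hi, (𝒮).inr_mem_onPath i t⟩
    · exact absurd (inr_mem_VL_union_VR hi t) hv

theorem edist_xL_yL_le : (𝒮).graph.edist ((𝒮).ext .xL) ((𝒮).ext .yL) ≤ (ℓ - p : ℕ) :=
  (𝒮).edist_src_dst_le .xyL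

theorem edist_xR_yR_le : (𝒮).graph.edist ((𝒮).ext .xR) ((𝒮).ext .yR) ≤ (ℓ - p : ℕ) :=
  (𝒮).edist_src_dst_le .xyR

theorem edist_yL_yR_le : (𝒮).graph.edist ((𝒮).ext .yL) ((𝒮).ext .yR) ≤ (p + q : ℕ) :=
  (𝒮).edist_src_dst_le .yy

theorem edist_wL_wR_le (k : Fin d) : (𝒮).graph.edist ((𝒮).ext (.wL k)) ((𝒮).ext (.wR k)) ≤ q :=
  (𝒮).edist_src_dst_le (.ww k)

theorem edist_xL_yR_le (hpℓ : p ≤ ℓ) :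
    (𝒮).graph.edist ((𝒮).ext .xL) ((𝒮).ext .yR) ≤ (ℓ + q : ℕ) :=
  edist_le_of_add_le edist_xL_yL_le edist_yL_yR_le (by omega)

theorem edist_xR_yL_le (hpℓ : p ≤ ℓ) :
    (𝒮).graph.edist ((𝒮).ext .xR) ((𝒮).ext .yL) ≤ (ℓ + q : ℕ) :=
  edist_le_of_add_le edist_xR_yR_le (SimpleGraph.edist_comm.trans_le edist_yL_yR_le)
    (by omega)

theorem edist_yL_wL_le (k : Fin d) : (𝒮).graph.edist ((𝒮).ext .yL) ((𝒮).ext (.wL k)) ≤ ℓ :=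
  (𝒮).edist_src_dst_le (.ywL k)

theorem edist_xL_wL_le (hpℓ : p ≤ ℓ) (k : Fin d) :
    (𝒮).graph.edist ((𝒮).ext .xL) ((𝒮).ext (.wL k)) ≤ (2 * ℓ - p : ℕ) :=
  edist_le_of_add_le edist_xL_yL_le (edist_yL_wL_le k) (by omega)

theorem edist_yR_wR_le (k : Fin d) : (𝒮).graph.edist ((𝒮).ext .yR) ((𝒮).ext (.wR k)) ≤ ℓ :=
  (𝒮).edist_src_dst_le (.ywR k)

theorem edist_xR_wR_le (hpℓ : p ≤ ℓ) (k : Fin d) :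
    (𝒮).graph.edist ((𝒮).ext .xR) ((𝒮).ext (.wR k)) ≤ (2 * ℓ - p : ℕ) :=
  edist_le_of_add_le edist_xR_yR_le (edist_yR_wR_le k) (by omega)

theorem edist_xL_wR_le (hpℓ : p ≤ ℓ) (k : Fin d) :
    (𝒮).graph.edist ((𝒮).ext .xL) ((𝒮).ext (.wR k)) ≤ (2 * ℓ - p + q : ℕ) :=
  edist_le_of_add_le (edist_xL_wL_le hpℓ k) (edist_wL_wR_le k) le_rfl

theorem edist_xR_wL_le (hpℓ : p ≤ ℓ) (k : Fin d) :
    (𝒮).graph.edist ((𝒮).ext .xR) ((𝒮).ext (.wL k)) ≤ (2 * ℓ - p + q : ℕ) :=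
  edist_le_of_add_le (edist_xR_wR_le hpℓ k)
    (SimpleGraph.edist_comm.trans_le (edist_wL_wR_le k)) le_rfl

theorem isBalanced_of_mem_onPath_xyL (hpℓ : p ≤ ℓ) {v : (𝒮).Vert} (hv : v ∈ (𝒮).onPath .xyL) :
    IsBalanced (𝒮).graph ((𝒮).ext .xL) ((𝒮).ext .xR) (2 * ℓ - p) q v := by
  obtain ⟨a, b, hab, hx, hy⟩ := PathSys.exists_edist_le_of_mem_onPath hv
  change a + b = ℓ - p at hab
  exact IsBalanced.of_edist_le (edist_le_of_le hx (by omega))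
    (edist_le_of_add_le (edist_xR_yL_le hpℓ) hy (by omega))

theorem isBalanced_of_mem_onPath_xyR (hpℓ : p ≤ ℓ) {v : (𝒮).Vert} (hv : v ∈ (𝒮).onPath .xyR) :
    IsBalanced (𝒮).graph ((𝒮).ext .xL) ((𝒮).ext .xR) (2 * ℓ - p) q v := by
  obtain ⟨a, b, hab, hx, hy⟩ := PathSys.exists_edist_le_of_mem_onPath hv
  change a + b = ℓ - p at hab
  exact (IsBalanced.of_edist_le (edist_le_of_le hx (by omega))
    (edist_le_of_add_le (edist_xL_yR_le hpℓ) hy (by omega))).symm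

theorem isBalanced_of_mem_onPath_ywL (hp : p ≤ 1) (hpℓ : p ≤ ℓ) {k : Fin d} {v : (𝒮).Vert}
    (hv : v ∈ (𝒮).onPath (.ywL k)) :
    IsBalanced (𝒮).graph ((𝒮).ext .xL) ((𝒮).ext .xR) (2 * ℓ - p) q v := by
  obtain ⟨a, b, hab, hy, hw⟩ := PathSys.exists_edist_le_of_mem_onPath hv
  change a + b = ℓ at hab
  -- The detour through `w` is needed only at `w` itself, because `p ≤ 1`.
  have hxR : (𝒮).graph.edist ((𝒮).ext .xR) v ≤ (2 * ℓ - p + q : ℕ) := by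
    rcases (by omega : a ≤ ℓ - p ∨ b = 0) with ha | rfl
    · exact edist_le_of_add_le (edist_xR_yL_le hpℓ) hy (by omega)
    · exact edist_le_of_add_le (edist_xR_wL_le hpℓ k) hw (by omega)
  exact IsBalanced.of_edist_le (edist_le_of_add_le edist_xL_yL_le hy (by omega))
    hxR

theorem isBalanced_of_mem_onPath_ywR (hp : p ≤ 1) (hpℓ : p ≤ ℓ) {k : Fin d} {v : (𝒮).Vert}
    (hv : v ∈ (𝒮).onPath (.ywR k)) :
    IsBalanced (𝒮).graph ((𝒮).ext .xL) ((𝒮).ext .xR) (2 * ℓ - p) q v := by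
  obtain ⟨a, b, hab, hy, hw⟩ := PathSys.exists_edist_le_of_mem_onPath hv
  change a + b = ℓ at hab
  have hxL : (𝒮).graph.edist ((𝒮).ext .xL) v ≤ (2 * ℓ - p + q : ℕ) := by
    rcases (by omega : a ≤ ℓ - p ∨ b = 0) with ha | rfl
    · exact edist_le_of_add_le (edist_xL_yR_le hpℓ) hy (by omega)
    · exact edist_le_of_add_le (edist_xL_wR_le hpℓ k) hw (by omega)
  exact (IsBalanced.of_edist_le (edist_le_of_add_le edist_xR_yR_le hy (by omega))
    hxL).symm

theorem isBalanced_of_mem_onPath_ww (hpℓ : p ≤ ℓ) {k : Fin d} {v : (𝒮).Vert}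
    (hv : v ∈ (𝒮).onPath (.ww k)) :
    IsBalanced (𝒮).graph ((𝒮).ext .xL) ((𝒮).ext .xR) (2 * ℓ - p) q v := by
  obtain ⟨a, b, hab, hL, hR⟩ := PathSys.exists_edist_le_of_mem_onPath hv
  exact ⟨a, b, hab, edist_le_of_add_le (edist_xL_wL_le hpℓ k) hL le_rfl,
    edist_le_of_add_le (edist_xR_wR_le hpℓ k) hR le_rfl⟩

theorem isBalanced_of_mem_onPath_yy (hpℓ : p ≤ ℓ) {v : (𝒮).Vert} (hv : v ∈ (𝒮).onPath .yy) :
    IsBalanced (𝒮).graph ((𝒮).ext .xL) ((𝒮).ext .xR) (2 * ℓ - p) q v := by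
  obtain ⟨a, b, hab, hL, hR⟩ := PathSys.exists_edist_le_of_mem_onPath hv
  change a + b = p + q at hab
  exact ⟨min a q, q - min a q, by omega,
    edist_le_of_add_le edist_xL_yL_le hL (by omega),
    edist_le_of_add_le edist_xR_yR_le hR (by omega)⟩

theorem isBalanced_of_mem_VM (hp : p ≤ 1) (hpℓ : p ≤ ℓ) {v : (𝒮).Vert} (hv : v ∈ VM n d l r ℓ p q) :
    IsBalanced (𝒮).graph ((𝒮).ext .xL) ((𝒮).ext .xR) (2 * ℓ - p) q v := by
  obtain ⟨i, hi, hvi⟩ := exists_isMiddle_mem_onPath hv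
  cases i with
  | xyL => exact isBalanced_of_mem_onPath_xyL hpℓ hvi
  | xyR => exact isBalanced_of_mem_onPath_xyR hpℓ hvi
  | ywL k => exact isBalanced_of_mem_onPath_ywL hp hpℓ hvi
  | ywR k => exact isBalanced_of_mem_onPath_ywR hp hpℓ hvi
  | ww k => exact isBalanced_of_mem_onPath_ww hpℓ hvi
  | yy => exact isBalanced_of_mem_onPath_yy hpℓ hvi
  | _ => exact hi.elim

end Middle

theorem dist_middle_vertices (n d ℓ p q : ℕ) (hn : 1 ≤ n) (hd : 1 ≤ d) (hℓ : 1 ≤ ℓ)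
    (hp : p ≤ 1) (l r : Fin n → Fin d → Fin 2) :
    (∀ s ∈ VM n d l r ℓ p q, ∀ t ∈ VM n d l r ℓ p q,
      (sys n d l r ℓ p q).graph.dist s t ≤ 4 * ℓ - 2 * p + q) ∧
    (∀ v ∈ VM n d l r ℓ p q,
      (sys n d l r ℓ p q).graph.dist ((sys n d l r ℓ p q).ext .xL) v ≤ 2 * ℓ - p + q ∧
      (sys n d l r ℓ p q).graph.dist v ((sys n d l r ℓ p q).ext .xR) ≤ 2 * ℓ - p + q) := by
  have hbal {v} (hv : v ∈ VM n d l r ℓ p q) := isBalanced_of_mem_VM hp (hp.trans hℓ) hv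
  refine ⟨fun s hs t ht => ?_, fun v hv => ⟨?_, ?_⟩⟩
  · have hst := ENat.toNat_le_of_le_natCast ((hbal hs).edist_le (hbal ht))
    exact hst.trans (by omega)
  · exact ENat.toNat_le_of_le_natCast (hbal hv).edist_left_le
  · rw [SimpleGraph.dist_comm]
    exact ENat.toNat_le_of_le_natCast (hbal hv).symm.edist_left_le

end GraphOV
end
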